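/- If f is a convex univalent mapping of the unit disk with f(0)=0, f'(0)=1, and second Taylor coefficient a₂, then Re(a₂·f(ζ)) ≥ -1/2 + (1/2)(1-|ζ|²)|f(ζ)/ζ|² for all ζ in the unit disk; in particular Re(a₂·f(ζ)) > -1/2. -/

import Mathlib

open Complex Metric

lemma cse_inv (f : ℂ → ℂ)
    (hdiff : DifferentiableOn ℂ f (ball (0:ℂ) 1))
    (hinj : Set.InjOn f (ball (0:ℂ) 1)) (hf'0 : deriv f 0 = 1) :
    ∃ g : ℂ → ℂ, (∀ z ∈ ball (0:ℂ) 1, g (f z) = z) ∧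
      ∀ z ∈ ball (0:ℂ) 1, deriv f z ≠ 0 ∧ HasDerivAt g (deriv f z)⁻¹ (f z) := by
  classical
  set g := Function.invFunOn f (ball (0:ℂ) 1) with hg
  have hgf : ∀ z ∈ ball (0:ℂ) 1, g (f z) = z := fun z hz => hinj.leftInvOn_invFunOn hz
  refine ⟨g, hgf, ?_⟩
  have hA : AnalyticOnNhd ℂ f (ball (0:ℂ) 1) := hdiff.analyticOnNhd isOpen_ball
  have hA' : AnalyticOnNhd ℂ (deriv f) (ball (0:ℂ) 1) := hA.deriv
  have hnz : ∀ z ∈ ball (0:ℂ) 1, ∀ᶠ y in nhdsWithin z {z}ᶜ, deriv f y ≠ 0 := by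
    intro z hz
    refine ((hA' z hz).eventually_eq_zero_or_eventually_ne_zero).resolve_left fun h => ?_
    have := hA'.eqOn_zero_of_preconnected_of_eventuallyEq_zero
      (convex_ball (0:ℂ) 1).isPreconnected hz h (mem_ball_self one_pos)
    simp [hf'0] at this
  have hin : ∀ z ∈ ball (0:ℂ) 1, ∀ᶠ y in nhds z, y ∈ ball (0:ℂ) 1 :=
    fun z hz => isOpen_ball.mem_nhds hz
  have hmap : ∀ z ∈ ball (0:ℂ) 1, nhds (f z) ≤ Filter.map f (nhds z) := by
    intro z hz
    refine ((hA z hz).eventually_constant_or_nhds_le_map_nhds).resolve_left fun h => ?_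
    have h2 : f =ᶠ[nhds z] fun _ => f z := h
    have h3 : deriv f =ᶠ[nhds z] deriv (fun _ => f z) := h2.deriv
    have h4 := (h3.filter_mono nhdsWithin_le_nhds).and (hnz z hz)
    obtain ⟨y, hy1, hy2⟩ := h4.exists
    simp at hy1
    exact hy2 hy1
  have hcont : ∀ z ∈ ball (0:ℂ) 1, Filter.Tendsto g (nhds (f z)) (nhds z) := by
    intro z hz
    refine (Filter.map_mono (hmap z hz)).trans ?_
    rw [Filter.map_map]
    have : (g ∘ f) =ᶠ[nhds z] id := by
      filter_upwards [hin z hz] with y hy using hgf y hy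
    rw [Filter.map_congr this, Filter.map_id]
  have hfg : ∀ z ∈ ball (0:ℂ) 1, ∀ᶠ w in nhds (f z), f (g w) = w ∧ g w ∈ ball (0:ℂ) 1 := by
    intro z hz
    apply hmap z hz
    change ∀ᶠ w in Filter.map f (nhds z), _
    rw [Filter.eventually_map]
    filter_upwards [hin z hz] with y hy
    rw [hgf y hy]
    exact ⟨rfl, hy⟩
  have hd0 : ∀ z ∈ ball (0:ℂ) 1, HasDerivAt f (deriv f z) z := fun z hz =>
    (hdiff.differentiableAt (isOpen_ball.mem_nhds hz)).hasDerivAt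
  have hd1 : ∀ z ∈ ball (0:ℂ) 1, deriv f z ≠ 0 → HasDerivAt g (deriv f z)⁻¹ (f z) := by
    intro z hz h
    refine HasDerivAt.of_local_left_inverse (f := f) ?_ ?_ h ((hfg z hz).mono fun _ h => h.1)
    · unfold ContinuousAt; rw [hgf z hz]; exact hcont z hz
    · rw [hgf z hz]; exact hd0 z hz
  intro z hz
  have hne : deriv f z ≠ 0 := by
    have hca : ContinuousAt g (f z) := by
      unfold ContinuousAt; rw [hgf z hz]; exact hcont z hz
    have hdp : ∀ᶠ w in nhdsWithin (f z) {f z}ᶜ, DifferentiableAt ℂ g w := by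
      have ht : Filter.Tendsto g (nhdsWithin (f z) {f z}ᶜ) (nhdsWithin z {z}ᶜ) := by
        refine tendsto_nhdsWithin_iff.2 ⟨(hcont z hz).mono_left nhdsWithin_le_nhds, ?_⟩
        filter_upwards [(hfg z hz).filter_mono nhdsWithin_le_nhds, self_mem_nhdsWithin] with w hw hw'
        intro h
        simp only [Set.mem_singleton_iff] at h
        apply hw'
        rw [← hw.1, h]; rfl
      filter_upwards [(hfg z hz).filter_mono nhdsWithin_le_nhds, ht.eventually (hnz z hz)] with w hw h
      have := (hd1 _ hw.2 h).differentiableAt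
      rwa [hw.1] at this
    have han := (analyticAt_of_differentiable_on_punctured_nhds_of_continuousAt hdp hca)
    have h1 := (han.differentiableAt.hasDerivAt).comp z (hd0 z hz)
    have h2 : HasDerivAt (g ∘ f) 1 z := by
      refine (hasDerivAt_id z).congr_of_eventuallyEq ?_
      filter_upwards [hin z hz] with y hy using hgf y hy
    have h3 := h1.unique h2
    intro h
    simp [h] at h3
  exact ⟨hne, hd1 z hz hne⟩

/-- starlikeness type inequality -/
lemma cse_step1 (f : ℂ → ℂ)
    (hdiff : DifferentiableOn ℂ f (ball (0:ℂ) 1))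
    (hinj : Set.InjOn f (ball (0:ℂ) 1))
    (hconv : Convex ℝ (f '' ball (0:ℂ) 1)) (hf0 : f 0 = 0) (hf'0 : deriv f 0 = 1)
    (z ζ : ℂ) (hz : z ∈ ball (0:ℂ) 1) (hz0 : z ≠ 0) (hle : ‖ζ‖ ≤ ‖z‖) :
    0 ≤ (z * deriv f z / (f z - f ζ)).re := by
  obtain ⟨g, hgf, hg⟩ := cse_inv f hdiff hinj hf'0
  have hzp : 0 < ‖z‖ := norm_pos_iff.2 hz0
  set u := ζ / z with hu
  have hu1 : ‖u‖ ≤ 1 := by rw [hu, norm_div]; exact div_le_one_of_le₀ hle hzp.le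
  have huz : u * z = ζ := by rw [hu]; field_simp
  have hmem : ∀ s ∈ ball (0:ℂ) 1, u * s ∈ ball (0:ℂ) 1 := by
    intro s hs
    simp only [mem_ball_zero_iff, norm_mul] at hs ⊢
    nlinarith [norm_nonneg s, norm_nonneg u]
  have hcurve : ∀ t : ℝ, 0 ≤ t → t ≤ 1 → ‖g ((1-t) * f z + t * f ζ)‖ ≤ ‖z‖ := by
    intro t ht0 ht1
    have him : ∀ s ∈ ball (0:ℂ) 1, (1-t) * f s + t * f (u*s) ∈ f '' ball (0:ℂ) 1 := by
      intro s hs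
      have := hconv ⟨s, hs, rfl⟩ ⟨u*s, hmem s hs, rfl⟩ (sub_nonneg.2 ht1) ht0 (by ring)
      simpa using this
    have := Complex.norm_le_norm_of_mapsTo_ball (f := fun s => g ((1-t) * f s + t * f (u*s)))
      (R := 1) (z := z) ?_ ?_ ?_ (by simpa using hz)
    · simpa [huz] using this
    · intro s hs
      obtain ⟨y, hy, hye⟩ := him s hs
      have h1 : DifferentiableAt ℂ g ((1-t) * f s + t * f (u*s)) := by
        rw [← hye]; exact (hg y hy).2.differentiableAt
      have h2 : DifferentiableAt ℂ f s := hdiff.differentiableAt (isOpen_ball.mem_nhds hs)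
      have h3 : DifferentiableAt ℂ f (u*s) := hdiff.differentiableAt (isOpen_ball.mem_nhds (hmem s hs))
      have h4 : DifferentiableAt ℂ (fun s => f (u*s)) s :=
        DifferentiableAt.comp s (g := f) (f := fun s => u * s) h3 (by fun_prop)
      have h5 : DifferentiableAt ℂ (fun s => (1-(t:ℂ)) * f s + t * f (u*s)) s := by fun_prop
      exact (DifferentiableAt.comp s (g := g) h1 h5).differentiableWithinAt
    · intro s hs
      obtain ⟨y, hy, hye⟩ := him s hs
      simp only
      rw [← hye, hgf y hy]
      exact ball_subset_closedBall hy
    · have := hgf 0 (by simp)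
      rw [hf0] at this
      simp [hf0, this]
  -- derivative of squared norm
  set v := (f ζ - f z) * (deriv f z)⁻¹ with hv
  have hder : HasDerivAt (fun t : ℝ => g ((1-t) * f z + t * f ζ)) v 0 := by
    have h1 : HasDerivAt (fun t : ℂ => (1-t) * f z + t * f ζ) (f ζ - f z) ((0:ℝ):ℂ) := by
      have := (((hasDerivAt_id ((0:ℝ):ℂ)).const_sub 1).mul_const (f z)).add
        ((hasDerivAt_id ((0:ℝ):ℂ)).mul_const (f ζ))
      exact this.congr_deriv (by ring)
    have h2 : HasDerivAt g (deriv f z)⁻¹ ((1-((0:ℝ):ℂ)) * f z + ((0:ℝ):ℂ) * f ζ) := by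
      simpa using (hg z hz).2
    have h3 := (HasDerivAt.comp ((0:ℝ):ℂ) (h₂ := g) h2 h1).comp_ofReal
    exact h3.congr_deriv (by rw [hv]; ring)
  have hn := hder.norm_sq
  have hle0 : 2 * inner ℝ (g ((1-((0:ℝ):ℂ)) * f z + ((0:ℝ):ℂ) * f ζ)) v ≤ 0 := by
    have hmax : ∀ t ∈ Set.Icc (0:ℝ) 1, ‖g ((1-t) * f z + t * f ζ)‖^2 ≤ ‖g ((1-((0:ℝ):ℂ)) * f z + ((0:ℝ):ℂ) * f ζ)‖^2 := by
      intro t ht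
      have h0 : g ((1-((0:ℝ):ℂ)) * f z + ((0:ℝ):ℂ) * f ζ) = z := by simpa using hgf z hz
      rw [h0]
      exact pow_le_pow_left₀ (norm_nonneg _) (hcurve t ht.1 ht.2) 2
    have ht := hn.hasDerivWithinAt (s := Set.Ioi 0)
    rw [hasDerivWithinAt_iff_tendsto_slope' (by simp)] at ht
    refine le_of_tendsto ht ?_
    filter_upwards [Ioo_mem_nhdsGT (zero_lt_one' ℝ)] with t ht
    rw [slope_def_field]
    exact div_nonpos_of_nonpos_of_nonneg (sub_nonpos.2 (hmax t ⟨ht.1.le, ht.2.le⟩)) (by simpa using ht.1.le)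
  have h0 : g ((1-((0:ℝ):ℂ)) * f z + ((0:ℝ):ℂ) * f ζ) = z := by simpa using hgf z hz
  rw [h0] at hle0
  have hd := (hg z hz).1
  have hkey : 0 ≤ ((f z - f ζ) / (z * deriv f z)).re := by
    have e : (f z - f ζ) / (z * deriv f z) = ((‖z‖^2)⁻¹ : ℝ) * (-(v * (starRingEnd ℂ) z)) := by
      have : (((‖z‖^2)⁻¹ : ℝ) : ℂ) = (z * (starRingEnd ℂ) z)⁻¹ := by
        rw [Complex.mul_conj, Complex.normSq_eq_norm_sq]; push_cast; rfl
      rw [this, hv]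
      have hc : (starRingEnd ℂ) z ≠ 0 := by simpa using hz0
      field_simp
      ring
    rw [e, Complex.re_ofReal_mul, neg_re]
    have : inner ℝ z v = (v * (starRingEnd ℂ) z).re := by
      rw [Complex.inner]
    rw [this] at hle0
    have : 0 ≤ (‖z‖^2)⁻¹ := by positivity
    nlinarith
  rw [← inv_div, Complex.inv_re]
  exact div_nonneg hkey (normSq_nonneg _)

lemma cse_max (F : ℂ → ℂ) (hF : DifferentiableOn ℂ F (ball (0:ℂ) 1)) (r : ℝ) (hr0 : 0 < r)
    (hr : r < 1) (h : ∀ s, ‖s‖ = r → 0 ≤ (F s).re) (s : ℂ) (hs : ‖s‖ ≤ r) : 0 ≤ (F s).re := by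
  have hd : DiffContOnCl ℂ (fun s => Complex.exp (-F s)) (ball (0:ℂ) r) := by
    apply DifferentiableOn.diffContOnCl
    rw [closure_ball _ hr0.ne']
    exact ((hF.mono (closedBall_subset_ball hr)).neg).cexp
  have := Complex.norm_le_of_forall_mem_frontier_norm_le (C := 1) isBounded_ball hd (z := s) ?_ ?_
  · simpa [Complex.norm_exp] using this
  · intro y hy
    rw [frontier_ball _ hr0.ne', mem_sphere_zero_iff_norm] at hy
    simpa [Complex.norm_exp] using h y hy
  · rw [closure_ball _ hr0.ne']; simpa using hs

lemma cse_div (h : ℂ → ℂ) (hd : DifferentiableOn ℂ h (ball (0:ℂ) 1)) (c : ℂ)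
    (hc : c ∈ ball (0:ℂ) 1) (h0 : h c = 0) :
    ∃ k : ℂ → ℂ, DifferentiableOn ℂ k (ball (0:ℂ) 1) ∧ (∀ s, h s = (s - c) * k s) ∧
      k c = deriv h c := by
  refine ⟨dslope h c, ?_, ?_, dslope_same _ _⟩
  · exact (Complex.differentiableOn_dslope (isOpen_ball.mem_nhds hc)).2 hd
  · intro s
    have := sub_smul_dslope h c s
    rw [smul_eq_mul, h0, sub_zero] at this
    exact this.symm

lemma cse_D (f : ℂ → ℂ)
    (hdiff : DifferentiableOn ℂ f (ball (0:ℂ) 1))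
    (hinj : Set.InjOn f (ball (0:ℂ) 1)) (hf'0 : deriv f 0 = 1) (c : ℂ) (hc : c ∈ ball (0:ℂ) 1) :
    ∃ D : ℂ → ℂ, DifferentiableOn ℂ D (ball (0:ℂ) 1) ∧ (∀ s, f s - f c = (s - c) * D s) ∧
      D c = deriv f c ∧ ∀ s ∈ ball (0:ℂ) 1, D s ≠ 0 := by
  obtain ⟨D, h1, h2, h3⟩ := cse_div (fun s => f s - f c) (hdiff.sub_const _) c hc (sub_self _)
  have h3' : D c = deriv f c := by rw [h3]; simp
  refine ⟨D, h1, h2, h3', ?_⟩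
  intro s hs h0
  by_cases hsc : s = c
  · obtain ⟨g, -, hg⟩ := cse_inv f hdiff hinj hf'0
    rw [hsc, h3'] at h0
    exact (hg c hc).1 h0
  · have := h2 s
    rw [h0, mul_zero, sub_eq_zero] at this
    exact hsc (hinj hs hc this)

lemma cse_step2 (f : ℂ → ℂ)
    (hdiff : DifferentiableOn ℂ f (ball (0:ℂ) 1))
    (hinj : Set.InjOn f (ball (0:ℂ) 1))
    (hconv : Convex ℝ (f '' ball (0:ℂ) 1)) (hf0 : f 0 = 0) (hf'0 : deriv f 0 = 1)
    (z ζ : ℂ) (hz : z ∈ ball (0:ℂ) 1) (hlt : ‖ζ‖ < ‖z‖) :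
    0 ≤ (2 * z * deriv f z / (f z - f ζ) - (z + ζ) / (z - ζ)).re := by
  have hzp : 0 < ‖z‖ := (norm_nonneg ζ).trans_lt hlt
  have hz0 : z ≠ 0 := norm_pos_iff.1 hzp
  have hz1 : ‖z‖ < 1 := by simpa using hz
  obtain ⟨D, hD, hDe, hDc, hDn⟩ := cse_D f hdiff hinj hf'0 z hz
  obtain ⟨M, hM, hMe, -⟩ := cse_div (fun s => (z + s) * D s - 2 * z * deriv f z)
    (by fun_prop) z hz (by simp only [hDc]; ring)
  have hP : DifferentiableOn ℂ (fun s => M s / D s) (ball (0:ℂ) 1) := hM.div hD hDn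
  have hform : ∀ s ∈ ball (0:ℂ) 1, s ≠ z →
      M s / D s = 2 * z * deriv f z / (f z - f s) - (z + s) / (z - s) := by
    intro s hs hne
    have h1 : s - z ≠ 0 := sub_ne_zero.2 hne
    have h1' : z - s ≠ 0 := sub_ne_zero.2 hne.symm
    have h2 := hDn s hs
    have h3 : f z - f s = (z - s) * D s := by linear_combination -hDe s
    have h4 : M s = ((z + s) * D s - 2 * z * deriv f z) / (s - z) := by
      rw [hMe s]; field_simp
    rw [h3, h4, ← neg_sub z s]
    field_simp
    ring
  have hsph0 : ∀ s, ‖s‖ = ‖z‖ → s ≠ z → 0 ≤ (M s / D s).re := by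
    intro s hs hne
    rw [hform s (by simpa [hs] using hz1) hne]
    have h1 := cse_step1 f hdiff hinj hconv hf0 hf'0 z s hz hz0 hs.le
    have h2 : ((z + s) / (z - s)).re = 0 := by
      have e : normSq z = normSq s := by rw [normSq_eq_norm_sq, normSq_eq_norm_sq, hs]
      rw [Complex.div_re, ← add_div]
      rw [normSq_apply, normSq_apply] at e
      simp only [add_re, sub_re, add_im, sub_im]
      rw [div_eq_zero_iff]; left; linarith
    have e : 2 * z * deriv f z / (f z - f s) = ((2:ℝ):ℂ) * (z * deriv f z / (f z - f s)) := by
      push_cast; ring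
    rw [sub_re, h2, e, re_ofReal_mul]
    linarith
  have hsph : ∀ s, ‖s‖ = ‖z‖ → 0 ≤ (M s / D s).re := by
    intro s hs
    by_cases hne : s = z
    · subst hne
      have hc : ContinuousAt (fun s => M s / D s) s :=
        (hP.differentiableAt (isOpen_ball.mem_nhds hz)).continuousAt
      have hcc : Filter.Tendsto (fun t : ℝ => s * Complex.exp (t * I)) (nhdsWithin 0 {0}ᶜ) (nhds s) := by
        have : Continuous (fun t : ℝ => s * Complex.exp (t * I)) := by fun_prop
        have := this.tendsto 0
        simp only [ofReal_zero, zero_mul, Complex.exp_zero, mul_one] at this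
        exact this.mono_left nhdsWithin_le_nhds
      have ht := (Complex.continuous_re.tendsto _).comp (hc.tendsto.comp hcc)
      refine ge_of_tendsto ht ?_
      have hsm : ∀ᶠ t : ℝ in nhdsWithin 0 {0}ᶜ, t ∈ Set.Ioo (-1:ℝ) 1 :=
        nhdsWithin_le_nhds (Ioo_mem_nhds (by norm_num) (by norm_num))
      filter_upwards [hsm, self_mem_nhdsWithin] with t ht ht0
      apply hsph0
      · simp [Complex.norm_exp]
      · intro h
        have h1 : Complex.exp (t * I) = 1 := by
          apply mul_left_cancel₀ hz0; rw [mul_one]; exact h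
        have h2 : Real.sin t = 0 := by
          have := congrArg Complex.im h1
          simpa [Complex.exp_ofReal_mul_I_im] using this
        have hpi := Real.pi_gt_three
        rw [Real.sin_eq_zero_iff_of_lt_of_lt (by linarith [ht.1]) (by linarith [ht.2])] at h2
        exact ht0 h2
    · exact hsph0 s hs hne
  have hfin := cse_max _ hP ‖z‖ hzp hz1 hsph ζ hlt.le
  rwa [hform ζ (by simpa using hlt.trans hz1) (by rintro rfl; exact lt_irrefl _ hlt)] at hfin

lemma cse_step3 (f : ℂ → ℂ)
    (hdiff : DifferentiableOn ℂ f (ball (0:ℂ) 1))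
    (hinj : Set.InjOn f (ball (0:ℂ) 1))
    (hconv : Convex ℝ (f '' ball (0:ℂ) 1)) (hf0 : f 0 = 0) (hf'0 : deriv f 0 = 1)
    (ζ : ℂ) (hζ : ζ ∈ ball (0:ℂ) 1) :
    ∃ P : ℂ → ℂ, DifferentiableOn ℂ P (ball (0:ℂ) 1) ∧ (∀ s ∈ ball (0:ℂ) 1, 0 ≤ (P s).re) ∧
      ∀ s ∈ ball (0:ℂ) 1, s ≠ ζ →
        P s = 2 * s * deriv f s / (f s - f ζ) - (s + ζ) / (s - ζ) := by
  obtain ⟨D, hD, hDe, hDc, hDn⟩ := cse_D f hdiff hinj hf'0 ζ hζ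
  have hdf : DifferentiableOn ℂ (deriv f) (ball (0:ℂ) 1) := hdiff.deriv isOpen_ball
  obtain ⟨M, hM, hMe, -⟩ := cse_div (fun s => 2 * s * deriv f s - (s + ζ) * D s)
    (by fun_prop) ζ hζ (by simp only [hDc]; ring)
  have hP : DifferentiableOn ℂ (fun s => M s / D s) (ball (0:ℂ) 1) := hM.div hD hDn
  have hform : ∀ s ∈ ball (0:ℂ) 1, s ≠ ζ →
      M s / D s = 2 * s * deriv f s / (f s - f ζ) - (s + ζ) / (s - ζ) := by
    intro s hs hne
    have h1 : s - ζ ≠ 0 := sub_ne_zero.2 hne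
    have h2 := hDn s hs
    have h4 : M s = (2 * s * deriv f s - (s + ζ) * D s) / (s - ζ) := by
      rw [hMe s]; field_simp
    rw [hDe, h4]
    field_simp
  refine ⟨_, hP, ?_, hform⟩
  intro s hs
  simp only [mem_ball_zero_iff] at hs hζ
  obtain ⟨r, hr1, hr2⟩ := exists_between (max_lt hs hζ)
  have hs' := (le_max_left _ _).trans_lt hr1
  have hζ' := (le_max_right _ _).trans_lt hr1
  refine cse_max _ hP r ((norm_nonneg s).trans_lt hs') hr2 ?_ s hs'.le
  intro y hy
  have hyb : y ∈ ball (0:ℂ) 1 := by simpa [hy] using hr2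
  have hlt : ‖ζ‖ < ‖y‖ := by rwa [hy]
  rw [hform y hyb (by rintro rfl; exact lt_irrefl _ hlt)]
  exact cse_step2 f hdiff hinj hconv hf0 hf'0 y ζ hyb hlt

lemma cse_mobius (x a : ℂ) (hx : ‖x‖ ≤ 1) (ha : ‖a‖ < 1) :
    1 - (starRingEnd ℂ) a * x ≠ 0 ∧ ‖(x - a) / (1 - (starRingEnd ℂ) a * x)‖ ≤ 1 := by
  have hne : 1 - (starRingEnd ℂ) a * x ≠ 0 := by
    intro h
    have h1 : (starRingEnd ℂ) a * x = 1 := (sub_eq_zero.1 h).symm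
    have h2 := congrArg norm h1
    rw [norm_mul, RCLike.norm_conj, norm_one] at h2
    nlinarith [norm_nonneg x, norm_nonneg a]
  refine ⟨hne, ?_⟩
  rw [norm_div]
  refine div_le_one_of_le₀ ?_ (norm_nonneg _)
  refine (sq_le_sq₀ (norm_nonneg _) (norm_nonneg _)).1 ?_
  have hx2 : normSq x ≤ 1 := by rw [normSq_eq_norm_sq]; nlinarith [norm_nonneg x]
  have ha2 : normSq a ≤ 1 := by rw [normSq_eq_norm_sq]; nlinarith [norm_nonneg a]
  rw [← normSq_eq_norm_sq, ← normSq_eq_norm_sq]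
  rw [normSq_apply] at *
  simp [normSq_apply] at *
  nlinarith [mul_nonneg (sub_nonneg.2 hx2) (sub_nonneg.2 ha2)]

lemma cse_pick (w : ℂ → ℂ) (hd : DifferentiableOn ℂ w (ball (0:ℂ) 1))
    (hb : ∀ s ∈ ball (0:ℂ) 1, ‖w s‖ ≤ 1) : ‖deriv w 0‖ ≤ 1 - ‖w 0‖^2 := by
  have h00 : (0:ℂ) ∈ ball (0:ℂ) 1 := by simp
  have key : ∀ c : ℝ, 0 < c → c < 1 → c * ‖deriv w 0‖ ≤ 1 - c^2 * ‖w 0‖^2 := by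
    intro c hc0 hc1
    set a : ℂ := c * w 0 with ha
    have hcb : ∀ s ∈ ball (0:ℂ) 1, ‖(c:ℂ) * w s‖ < 1 := by
      intro s hs
      rw [norm_mul, norm_real, Real.norm_of_nonneg hc0.le]
      nlinarith [hb s hs, norm_nonneg (w s)]
    have ha1 : ‖a‖ < 1 := hcb 0 h00
    have hm := fun s hs => cse_mobius ((c:ℂ) * w s) a (hcb s hs).le ha1
    have hhd : DifferentiableOn ℂ
      (fun s => ((c:ℂ) * w s - a) / (1 - (starRingEnd ℂ) a * ((c:ℂ) * w s))) (ball (0:ℂ) 1) :=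
      DifferentiableOn.div (by fun_prop) (by fun_prop) (fun s hs => (hm s hs).1)
    have hs := Complex.norm_deriv_le_one_of_mapsTo_ball hhd (fun s hs => by
      simpa [ha] using (hm s hs).2) one_pos
    have hwd : HasDerivAt w (deriv w 0) 0 :=
      (hd.differentiableAt (isOpen_ball.mem_nhds h00)).hasDerivAt
    have h1 := (((hwd.const_mul (c:ℂ)).sub_const a).div
      (((hwd.const_mul (c:ℂ)).const_mul ((starRingEnd ℂ) a)).const_sub 1) (hm 0 h00).1)
    have h2 := h1.deriv
    have hea : (1 - (starRingEnd ℂ) a * ((c:ℂ) * w 0)) = ((1 - ‖a‖^2 : ℝ) : ℂ) := by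
      rw [← ha, mul_comm, Complex.mul_conj, normSq_eq_norm_sq]; push_cast; rfl
    have hpos : 0 < 1 - ‖a‖^2 := by nlinarith [norm_nonneg a]
    have h3 : deriv (fun s => ((c:ℂ) * w s - a) / (1 - (starRingEnd ℂ) a * ((c:ℂ) * w s))) 0
        = (c:ℂ) * deriv w 0 / ((1 - ‖a‖^2 : ℝ) : ℂ) := by
      refine h2.trans ?_
      rw [hea, ← ha]
      have : ((1 - ‖a‖^2 : ℝ) : ℂ) ≠ 0 := by exact_mod_cast hpos.ne'
      field_simp
      ring
    rw [h3, norm_div, norm_mul, norm_real, norm_real, Real.norm_of_nonneg hc0.le,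
      Real.norm_of_nonneg hpos.le, div_le_one hpos] at hs
    have : ‖a‖ = c * ‖w 0‖ := by
      rw [ha, norm_mul, norm_real, Real.norm_of_nonneg hc0.le]
    rw [this] at hs
    linarith
  have t1 : Filter.Tendsto (fun c : ℝ => c * ‖deriv w 0‖) (nhdsWithin 1 (Set.Iio 1))
      (nhds (1 * ‖deriv w 0‖)) :=
    (Continuous.tendsto (by fun_prop) 1).mono_left nhdsWithin_le_nhds
  have t2 : Filter.Tendsto (fun c : ℝ => 1 - c^2 * ‖w 0‖^2) (nhdsWithin 1 (Set.Iio 1))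
      (nhds (1 - 1^2 * ‖w 0‖^2)) :=
    (Continuous.tendsto (f := fun c : ℝ => 1 - c^2 * ‖w 0‖^2) (by fun_prop) 1).mono_left
      nhdsWithin_le_nhds
  have := le_of_tendsto_of_tendsto t1 t2 (by
    filter_upwards [Ioo_mem_nhdsLT (zero_lt_one' ℝ)] with c hc using key c hc.1 hc.2)
  simpa using this

lemma cse_main (f : ℂ → ℂ)
    (hdiff : DifferentiableOn ℂ f (ball (0:ℂ) 1))
    (hinj : Set.InjOn f (ball (0:ℂ) 1))
    (hconv : Convex ℝ (f '' ball (0:ℂ) 1)) (hf0 : f 0 = 0) (hf'0 : deriv f 0 = 1)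
    (a₂ : ℂ) (ha₂ : a₂ = deriv (deriv f) 0 / 2)
    (ζ : ℂ) (hζ : ζ ∈ ball (0:ℂ) 1) (hζ0 : ζ ≠ 0) :
    f ζ ≠ 0 ∧ (a₂ * f ζ).re ≥ -1/2 + (1/2) * (1 - ‖ζ‖^2) * ‖f ζ / ζ‖^2 := by
  have h00 : (0:ℂ) ∈ ball (0:ℂ) 1 := by simp
  have hw0 : f ζ ≠ 0 := by
    intro h; exact hζ0 (hinj hζ h00 (h.trans hf0.symm))
  refine ⟨hw0, ?_⟩
  obtain ⟨P, hP, hPre, hPf⟩ := cse_step3 f hdiff hinj hconv hf0 hf'0 ζ hζ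
  have hP0 : P 0 = 1 := by
    rw [hPf 0 h00 hζ0.symm]; simp; field_simp
  have hP1 : ∀ s ∈ ball (0:ℂ) 1, P s + 1 ≠ 0 := by
    intro s hs h
    have := congrArg Complex.re h
    simp at this
    linarith [hPre s hs]
  have hφ : DifferentiableOn ℂ (fun s => (P s - 1) / (P s + 1)) (ball (0:ℂ) 1) :=
    (hP.sub_const 1).div (hP.add_const 1) hP1
  have hφb : Set.MapsTo (fun s => (P s - 1) / (P s + 1)) (ball (0:ℂ) 1)
      (closedBall ((fun s => (P s - 1) / (P s + 1)) 0) 1) := by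
    intro s hs
    simp only [hP0, sub_self, zero_div, mem_closedBall_zero_iff, norm_div]
    refine div_le_one_of_le₀ ?_ (norm_nonneg _)
    refine (sq_le_sq₀ (norm_nonneg _) (norm_nonneg _)).1 ?_
    rw [← normSq_eq_norm_sq, ← normSq_eq_norm_sq, normSq_apply, normSq_apply]
    simp
    nlinarith [hPre s hs]
  set ω := dslope (fun s => (P s - 1) / (P s + 1)) 0 with hω
  have hωd : DifferentiableOn ℂ ω (ball (0:ℂ) 1) :=
    (Complex.differentiableOn_dslope (isOpen_ball.mem_nhds h00)).2 hφ
  have hωb : ∀ s ∈ ball (0:ℂ) 1, ‖ω s‖ ≤ 1 := by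
    intro s hs
    simpa using Complex.norm_dslope_le_div_of_mapsTo_ball hφ hφb hs
  have hpick := cse_pick ω hωd hωb
  -- explicit formula near zero
  set A : ℂ → ℂ := fun s => deriv f s * (s - ζ) - (f s - f ζ) with hA
  set B : ℂ → ℂ := fun s => s * (deriv f s * (s - ζ)) - ζ * (f s - f ζ) with hB
  have hdf : HasDerivAt f 1 0 := by
    rw [← hf'0]; exact (hdiff.differentiableAt (isOpen_ball.mem_nhds h00)).hasDerivAt
  have hddf : HasDerivAt (deriv f) (2 * a₂) 0 := by
    have := ((hdiff.deriv isOpen_ball).differentiableAt (isOpen_ball.mem_nhds h00)).hasDerivAt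
    exact this.congr_deriv (by rw [ha₂]; ring)
  have hA1 : HasDerivAt A (-(2 * a₂ * ζ)) 0 := by
    have := (hddf.mul ((hasDerivAt_id (0:ℂ)).sub_const ζ)).sub (hdf.sub_const (f ζ))
    exact this.congr_deriv (by simp [hf'0])
  have hB1 : HasDerivAt B (-(2 * ζ)) 0 := by
    have := ((hasDerivAt_id (0:ℂ)).mul (hddf.mul ((hasDerivAt_id (0:ℂ)).sub_const ζ))).sub
      ((hdf.sub_const (f ζ)).const_mul ζ)
    exact this.congr_deriv (by simp [hf'0]; ring)
  have hA0 : A 0 = f ζ - ζ := by simp [hA, hf0, hf'0]; ring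
  have hB0 : B 0 = ζ * f ζ := by simp [hB, hf0]
  have hBn : B 0 ≠ 0 := by rw [hB0]; exact mul_ne_zero hζ0 hw0
  have hAB := hA1.div hB1 hBn
  have heq : ω =ᶠ[nhds 0] A / B := by
    have hωc : ContinuousAt ω 0 :=
      (hωd.differentiableAt (isOpen_ball.mem_nhds h00)).continuousAt
    rw [← hωc.eventuallyEq_nhds_iff_eventuallyEq_nhdsNE hAB.continuousAt]
    have e1 : ∀ᶠ s in nhdsWithin (0:ℂ) {0}ᶜ, s ∈ ball (0:ℂ) 1 :=
      nhdsWithin_le_nhds (isOpen_ball.mem_nhds h00)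
    have e2 : ∀ᶠ s in nhdsWithin (0:ℂ) {0}ᶜ, s ≠ ζ :=
      nhdsWithin_le_nhds (isOpen_ne.mem_nhds hζ0.symm)
    filter_upwards [e1, e2, self_mem_nhdsWithin] with s hs hsζ hs0
    have hs0 : s ≠ 0 := hs0
    have hd1 : s - ζ ≠ 0 := sub_ne_zero.2 hsζ
    have hd2 : f s - f ζ ≠ 0 := sub_ne_zero.2 fun h => hsζ (hinj hs hζ h)
    have hm : P s - 1 = 2 * s * A s / ((f s - f ζ) * (s - ζ)) := by
      rw [hPf s hs hsζ, hA]; field_simp; ring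
    have hp : P s + 1 = 2 * B s / ((f s - f ζ) * (s - ζ)) := by
      rw [hPf s hs hsζ, hB]; field_simp; ring
    have hBs : B s ≠ 0 := by
      intro h; apply hP1 s hs; rw [hp, h]; simp
    rw [hω, dslope_of_ne _ hs0, slope_def_field, hP0, hm, hp, Pi.div_apply]
    field_simp
    simp
    ring
  have hω0 : ω 0 = (f ζ - ζ) / (ζ * f ζ) := by
    rw [heq.eq_of_nhds, Pi.div_apply, hA0, hB0]
  have hω1 : deriv ω 0 = 2 * (f ζ / ζ - 1 - a₂ * f ζ) / (f ζ)^2 := by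
    rw [heq.deriv_eq, hAB.deriv, hA0, hB0]
    field_simp
    ring
  rw [hω0, hω1] at hpick
  set w := f ζ with hw
  have hwp : 0 < ‖w‖ := norm_pos_iff.2 hw0
  have e1 : (w - ζ) / (ζ * w) = (w / ζ - 1) / w := by field_simp
  rw [e1, norm_div, norm_div, norm_pow, norm_mul, Complex.norm_two, div_pow,
    div_le_iff₀ (by positivity), sub_mul, one_mul, div_mul_cancel₀ _ (by positivity)] at hpick
  have hr := Complex.re_le_norm (w / ζ - 1 - a₂ * w)
  have hx : ‖w‖ = ‖w / ζ‖ * ‖ζ‖ := by rw [← norm_mul]; congr 1; field_simp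
  have hq : ‖w / ζ - 1‖^2 = ‖w / ζ‖^2 - 2 * (w / ζ).re + 1 := by
    rw [← normSq_eq_norm_sq, ← normSq_eq_norm_sq, normSq_apply, normSq_apply]; simp; ring
  rw [hq] at hpick
  simp only [sub_re, one_re] at hr
  have hx2 : ‖w‖^2 = ‖w / ζ‖^2 * ‖ζ‖^2 := by rw [hx]; ring
  linarith

theorem convex_second_coeff_estimate
    (f : ℂ → ℂ)
    (hdiff : DifferentiableOn ℂ f (ball (0:ℂ) 1))
    (hinj : Set.InjOn f (ball (0:ℂ) 1))
    (hconv : Convex ℝ (f '' ball (0:ℂ) 1))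
    (hf0 : f 0 = 0) (hf'0 : deriv f 0 = 1)
    (a₂ : ℂ) (ha₂ : a₂ = deriv (deriv f) 0 / 2) :
    (∀ ζ ∈ ball (0:ℂ) 1, ζ ≠ 0 →
      (a₂ * f ζ).re ≥ -1/2 + (1/2) * (1 - ‖ζ‖^2) * ‖f ζ / ζ‖^2) ∧
    (∀ ζ ∈ ball (0:ℂ) 1, (a₂ * f ζ).re > -1/2) := by
  have hm := cse_main f hdiff hinj hconv hf0 hf'0 a₂ ha₂
  refine ⟨fun ζ h h0 => (hm ζ h h0).2, fun ζ h => ?_⟩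
  by_cases h0 : ζ = 0
  · rw [h0, hf0]; norm_num
  · obtain ⟨h1, h2⟩ := hm ζ h h0
    have h3 : 0 < ‖f ζ / ζ‖ := norm_pos_iff.2 (div_ne_zero h1 h0)
    have h4 : ‖ζ‖ < 1 := by simpa using h
    have h5 : 0 < 1 - ‖ζ‖^2 := by nlinarith [norm_nonneg ζ]
    have h6 : 0 < (1/2) * (1 - ‖ζ‖^2) * ‖f ζ / ζ‖^2 := by positivity
    linarith
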